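/- arXiv:2202.08178 — 2 statements merged into one kernel-verified Lean document; each statement's English description precedes it below -/
import Mathlib

section
/- Strict pre-dissipativity at some steady state (Theorem 4.7): Assume A is densely defined and closed, K is coercive (there is c > 0 with ‖Ku‖ ≥ c‖u‖ for all u ∈ U), and the range {Ax + Bu : x ∈ dom A, u ∈ U} is closed in H. Let P be a bounded self-adjoint operator on H. Then there exist γ > 0, w ∈ H, a controlled equilibrium (x_e,u_e) and α of class 𝒦 such that 2Re⟨Ax + Bu, γPx + w⟩ ≤ ℓ(x,u) − ℓ(x_e,u_e) − α(‖x − x_e‖) for all x ∈ dom A, u ∈ U, if and only if there exist η > 0 and m > 0 such that ‖Cx‖² − 2η Re⟨Ax, Px⟩ ≥ m‖x‖² for all x ∈ dom A. Moreover, in this case (x_e,u_e) can be chosen as the unique minimizer of ℓ over the set {(x,u) ∈ dom A × U : Ax + Bu = 0}. -/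
open scoped InnerProductSpace
open RCLike ContinuousLinearMap

/-- A function of class `𝒦`: continuous, strictly increasing on `[0,∞)` with `α 0 = 0`. -/
def IsClassK (α : ℝ → ℝ) : Prop :=
  ContinuousOn α (Set.Ici 0) ∧ StrictMonoOn α (Set.Ici 0) ∧ α 0 = 0

/-- The generalized linear-quadratic stage cost
`ℓ(x,u) = ‖Cx‖² + ‖Ku‖² + 2Re⟨z,x⟩ + 2Re⟨v,u⟩`. -/
noncomputable def ell {𝕜 H U Y Z : Type*} [RCLike 𝕜]
    [NormedAddCommGroup H] [InnerProductSpace 𝕜 H]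
    [NormedAddCommGroup U] [InnerProductSpace 𝕜 U]
    [NormedAddCommGroup Y] [InnerProductSpace 𝕜 Y]
    [NormedAddCommGroup Z] [InnerProductSpace 𝕜 Z]
    (C : H →L[𝕜] Y) (K : U →L[𝕜] Z) (z : H) (v : U) (x : H) (u : U) : ℝ :=
  ‖C x‖ ^ 2 + ‖K u‖ ^ 2 + 2 * re ⟪z, x⟫_𝕜 + 2 * re ⟪v, u⟫_𝕜

/-!
A Lyapunov-type inequality for `A` alone, rescaled by a small factor, absorbs the cross term
`Re⟨Bu, Px⟩`, so the form `‖Cx‖² + ‖Ku‖² - 2γ Re⟨Ax + Bu, Px⟩` is coercive in `(x, u)`. On the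
equilibria this form is the quadratic part of `ℓ`, hence `ℓ` has a stationary point there, and the
closed range of `(x, u) ↦ Ax + Bu` turns stationarity into the existence of a Lagrange
multiplier. Shifting the multiplier gives the linear part `w` of the storage function, and the
dissipation inequality at the stationary point becomes the coercivity of the form at
`(x - xe, u - ue)`. Conversely, averaging the dissipation inequality at `xe + x` and `xe - x`
removes everything that is not quadratic.
-/

section LagrangeMultiplier

variable {𝕜 X F G : Type*} [RCLike 𝕜] [NormedAddCommGroup X] [NormedSpace 𝕜 X] [CompleteSpace X]
  [NormedAddCommGroup F] [InnerProductSpace 𝕜 F] [NormedAddCommGroup G] [InnerProductSpace 𝕜 G]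

theorem exists_forall_eq_inner_map_of_isComplete_range (T : X →L[𝕜] F)
    (hT : IsComplete (Set.range T)) (f : StrongDual 𝕜 X) (hf : ∀ p, T p = 0 → f p = 0) :
    ∃ q, ∀ p, f p = ⟪T q, T p⟫_𝕜 := by
  have : CompleteSpace T.range := hT.completeSpace_coe
  have hsurj : Function.Surjective T.rangeRestrict := T.toLinearMap.surjective_rangeRestrict
  obtain ⟨g, hg⟩ : ∃ g : Module.Dual 𝕜 T.range, ∀ p, g (T.rangeRestrict p) = f p := by
    have hmem : f.toLinearMap ∈ T.rangeRestrict.toLinearMap.ker.dualAnnihilator :=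
      (Submodule.mem_dualAnnihilator _).2 fun p hp ↦ hf p (congrArg Subtype.val hp)
    rw [← LinearMap.range_dualMap_eq_dualAnnihilator_ker] at hmem
    exact hmem.imp fun g hg ↦ LinearMap.congr_fun hg
  have hgcont : Continuous g := by
    rw [(T.rangeRestrict.isQuotientMap hsurj).continuous_iff]
    exact f.continuous.congr fun p ↦ (hg p).symm
  obtain ⟨q, hq⟩ := hsurj ((InnerProductSpace.toDual 𝕜 T.range).symm ⟨g, hgcont⟩)
  refine ⟨q, fun p ↦ ?_⟩
  calc f p = ⟪(InnerProductSpace.toDual 𝕜 T.range).symm ⟨g, hgcont⟩, T.rangeRestrict p⟫_𝕜 := by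
        rw [InnerProductSpace.toDual_symm_apply]; exact (hg p).symm
    _ = ⟪T q, T p⟫_𝕜 := by rw [← hq]; rfl

theorem exists_forall_eq_inner_of_isClosed_range [CompleteSpace F] (T : X →ₗ.[𝕜] F)
    (hT : T.IsClosed) (hran : IsClosed (Set.range T)) (f : StrongDual 𝕜 X)
    (hf : ∀ p : T.domain, T p = 0 → f p = 0) :
    ∃ w : F, ∀ p : T.domain, f p = ⟪w, T p⟫_𝕜 := by
  have : CompleteSpace T.graph := IsClosed.completeSpace_coe (hs := hT)
  let π₁ : T.graph →L[𝕜] X := .fst 𝕜 X F ∘L T.graph.subtypeL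
  let π₂ : T.graph →L[𝕜] F := .snd 𝕜 X F ∘L T.graph.subtypeL
  have hrange : Set.range π₂ = Set.range T := by
    ext y
    constructor
    · rintro ⟨⟨_, hp⟩, rfl⟩
      obtain ⟨x, -, hx⟩ := (LinearPMap.mem_graph_iff T).1 hp
      exact ⟨x, hx⟩
    · rintro ⟨x, rfl⟩
      exact ⟨⟨_, T.mem_graph x⟩, rfl⟩
  obtain ⟨q, hq⟩ := exists_forall_eq_inner_map_of_isComplete_range π₂
    (hrange ▸ hran.isComplete) (f ∘L π₁) (by
      rintro ⟨_, hp⟩ hp₂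
      obtain ⟨x, hx₁, hx₂⟩ := (LinearPMap.mem_graph_iff T).1 hp
      exact (congrArg f hx₁).symm.trans (hf x (hx₂.trans hp₂)))
  exact ⟨π₂ q, fun p ↦ hq ⟨_, T.mem_graph p⟩⟩

theorem exists_stationary_point_and_multiplier [CompleteSpace F] (T : X →ₗ.[𝕜] F)
    (hT : T.IsClosed) (hran : IsClosed (Set.range T)) (S : X →L[𝕜] G) (κ : NNReal)
    (hS : ∀ p : T.domain, T p = 0 → ‖(p : X)‖ ≤ κ * ‖S p‖) (φ : StrongDual 𝕜 X) :
    ∃ (q : T.domain) (w : F), T q = 0 ∧ ∀ p : T.domain, ⟪S q, S p⟫_𝕜 + φ p = ⟪w, T p⟫_𝕜 := by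
  let N : Submodule 𝕜 X := T.graph.comap (LinearMap.inl 𝕜 X F)
  have mem_N (p : X) : p ∈ N ↔ ∃ x : T.domain, (x : X) = p ∧ T x = 0 :=
    LinearPMap.mem_graph_iff T
  have : CompleteSpace N :=
    (hT.preimage (ContinuousLinearMap.inl 𝕜 X F).continuous).completeSpace_coe
  have hSN : AntilipschitzWith κ (S ∘L N.subtypeL) := by
    refine ContinuousLinearMap.antilipschitz_of_bound _ ?_
    rintro ⟨p, hp⟩
    obtain ⟨x, rfl, hx⟩ := (mem_N p).1 hp
    exact hS x hx
  obtain ⟨⟨q, hqN⟩, hq⟩ := exists_forall_eq_inner_map_of_isComplete_range (S ∘L N.subtypeL)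
    (hSN.isComplete_range (S ∘L N.subtypeL).uniformContinuous) (-φ ∘L N.subtypeL) fun p hp ↦ by
      rw [hSN.injective (hp.trans (map_zero _).symm), map_zero]
  obtain ⟨xq, rfl, hxq⟩ := (mem_N q).1 hqN
  obtain ⟨w, hw⟩ := exists_forall_eq_inner_of_isClosed_range T hT hran (innerSL 𝕜 (S xq) ∘L S + φ)
    fun p hp ↦ by
      have hstat : -φ p = ⟪S xq, S p⟫_𝕜 := hq ⟨p, (mem_N p).2 ⟨p, rfl, hp⟩⟩
      simp [← hstat]
  exact ⟨xq, w, hxq, hw⟩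

end LagrangeMultiplier

theorem mul_norm_sq_le_of_le_on_sphere {𝕜 V : Type*} [RCLike 𝕜] [NormedAddCommGroup V]
    [NormedSpace 𝕜 V] {Q : V → ℝ} (hQ : ∀ (t : ℝ) (x : V), Q ((t : 𝕜) • x) = t ^ 2 * Q x) {r : ℝ}
    (hr : ∀ x, ‖x‖ = 1 → r ≤ Q x) (x : V) : r * ‖x‖ ^ 2 ≤ Q x := by
  rcases eq_or_ne x 0 with rfl | hx
  · have hQ0 := hQ 0 0
    simp only [smul_zero, ne_eq, OfNat.ofNat_ne_zero, not_false_eq_true, zero_pow, zero_mul] at hQ0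
    simp [hQ0]
  · have hunit := hr _ (norm_smul_inv_norm (𝕜 := 𝕜) hx)
    rw [← ofReal_inv, hQ, inv_pow, inv_mul_eq_div] at hunit
    exact (le_div_iff₀ (by positivity)).1 hunit

theorem norm_prodMk_sq_le {V W : Type*} [SeminormedAddGroup V] [SeminormedAddGroup W]
    (x : V) (y : W) : ‖(x, y)‖ ^ 2 ≤ ‖x‖ ^ 2 + ‖y‖ ^ 2 := by
  rw [Prod.norm_mk]
  rcases max_choice ‖x‖ ‖y‖ with h | h <;> rw [h]
  · exact le_add_of_nonneg_right (sq_nonneg _)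
  · exact le_add_of_nonneg_left (sq_nonneg _)

theorem two_mul_mul_le_half_add_half {a b d : ℝ} (ha : 0 < a) (hb : (2 * b) ^ 2 ≤ a * d)
    (s t : ℝ) : 2 * b * (s * t) ≤ a / 2 * s ^ 2 + d / 2 * t ^ 2 := by
  refine le_of_mul_le_mul_left ?_ ha
  linear_combination (1 / 2) * sq_nonneg (a * s - 2 * b * t) + t ^ 2 / 2 * hb

theorem isClassK_const_mul_sq {μ : ℝ} (hμ : 0 < μ) : IsClassK fun r ↦ μ * r ^ 2 :=
  ⟨by fun_prop,
    fun _ ha _ _ hab ↦ mul_lt_mul_of_pos_left (pow_lt_pow_left₀ hab ha two_ne_zero) hμ, by simp⟩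

theorem IsClassK.pos {α : ℝ → ℝ} (hα : IsClassK α) {r : ℝ} (hr : 0 < r) : 0 < α r :=
  hα.2.2.symm.trans_lt (hα.2.1 Set.self_mem_Ici hr.le hr)

section StageCost

variable {𝕜 H U Y Z : Type*} [RCLike 𝕜]
  [NormedAddCommGroup H] [InnerProductSpace 𝕜 H] [NormedAddCommGroup U] [InnerProductSpace 𝕜 U]
  [NormedAddCommGroup Y] [InnerProductSpace 𝕜 Y] [NormedAddCommGroup Z] [InnerProductSpace 𝕜 Z]
  (C : H →L[𝕜] Y) (K : U →L[𝕜] Z) (z : H) (v : U)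

/-- The first variation of the stage cost at `(x, u)` in the direction `(ξ, υ)`, before taking
`2 Re`: a `𝕜`-linear functional of `(ξ, υ)`. -/
noncomputable def ellVariation (x : H) (u : U) (ξ : H) (υ : U) : 𝕜 :=
  ⟪C x, C ξ⟫_𝕜 + ⟪K u, K υ⟫_𝕜 + (⟪z, ξ⟫_𝕜 + ⟪v, υ⟫_𝕜)

theorem ell_add (x ξ : H) (u υ : U) :
    ell C K z v (x + ξ) (u + υ) = ell C K z v x u + 2 * re (ellVariation C K z v x u ξ υ)
      + (‖C ξ‖ ^ 2 + ‖K υ‖ ^ 2) := by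
  simp only [ell, ellVariation, map_add, inner_add_right, norm_add_sq (𝕜 := 𝕜)]
  ring

theorem ell_add_add_ell_sub (x ξ : H) (u : U) :
    ell C K z v (x + ξ) u + ell C K z v (x - ξ) u = 2 * ell C K z v x u + 2 * ‖C ξ‖ ^ 2 := by
  simp only [ell, map_add, map_sub, inner_add_right, inner_sub_right, norm_add_sq (𝕜 := 𝕜),
    norm_sub_sq (𝕜 := 𝕜)]
  ring

end StageCost

section ControlOperator

variable {𝕜 H F U : Type*} [NontriviallyNormedField 𝕜] [NormedAddCommGroup H] [NormedSpace 𝕜 H]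
  [NormedAddCommGroup F] [NormedSpace 𝕜 F] [NormedAddCommGroup U] [NormedSpace 𝕜 U]
  {A : H →ₗ.[𝕜] F} {B : U →L[𝕜] F}

variable (A B) in
/-- The operator `(x, u) ↦ A x + B u` with domain `dom A × U`, whose kernel is the set of
controlled equilibria. -/
def controlOperator : H × U →ₗ.[𝕜] F := A.coprod (B.toLinearMap.toPMap ⊤)

theorem forall_controlOperator_domain {p : (controlOperator A B).domain → Prop} :
    (∀ q, p q) ↔ ∀ (x : A.domain) (u : U), p ⟨(x, u), x.2, trivial⟩ :=
  ⟨fun h _ _ ↦ h _, fun h q ↦ h ⟨q.1.1, q.2.1⟩ q.1.2⟩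

theorem range_controlOperator :
    Set.range (controlOperator A B) = {y | ∃ (x : A.domain) (u : U), A x + B u = y} := by
  ext y
  exact ⟨fun ⟨q, hq⟩ ↦ ⟨⟨q.1.1, q.2.1⟩, q.1.2, hq⟩, fun ⟨x, u, h⟩ ↦ ⟨⟨(x, u), x.2, trivial⟩, h⟩⟩

theorem isClosed_controlOperator (hA : A.IsClosed) : (controlOperator A B).IsClosed := by
  have hgraph : ((controlOperator A B).graph : Set ((H × U) × F)) =
      (fun p ↦ (p.1.1, p.2 - B p.1.2)) ⁻¹' A.graph := by
    ext ⟨⟨x, u⟩, y⟩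
    simp only [SetLike.mem_coe, Set.mem_preimage, LinearPMap.mem_graph_iff]
    constructor
    · rintro ⟨⟨_, hx, _⟩, rfl, rfl⟩
      exact ⟨⟨x, hx⟩, rfl, (add_sub_cancel_right _ _).symm⟩
    · rintro ⟨x', rfl, hy⟩
      exact ⟨⟨(x', u), x'.2, trivial⟩, rfl, add_eq_of_eq_sub hy⟩
  rw [LinearPMap.IsClosed, hgraph]
  exact hA.preimage (by fun_prop)

end ControlOperator

section OutputMap

variable {𝕜 H U Y Z : Type*} [RCLike 𝕜]
  [NormedAddCommGroup H] [NormedSpace 𝕜 H] [NormedAddCommGroup U] [NormedSpace 𝕜 U]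
  [NormedAddCommGroup Y] [InnerProductSpace 𝕜 Y] [NormedAddCommGroup Z] [InnerProductSpace 𝕜 Z]
  (C : H →L[𝕜] Y) (K : U →L[𝕜] Z)

/-- The output `(x, u) ↦ (C x, K u)`, valued in the Hilbert sum so that `‖outputMap C K (x, u)‖²` is
the quadratic part of the stage cost. -/
noncomputable def outputMap : H × U →L[𝕜] WithLp 2 (Y × Z) :=
  (WithLp.prodContinuousLinearEquiv 2 𝕜 Y Z).symm.toContinuousLinearMap ∘L C.prodMap K

theorem norm_outputMap_sq (x : H) (u : U) : ‖outputMap C K (x, u)‖ ^ 2 = ‖C x‖ ^ 2 + ‖K u‖ ^ 2 :=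
  WithLp.prod_norm_sq_eq_of_L2 _

end OutputMap

theorem exists_coercive_of_lyapunov {𝕜 H F U Y Z : Type*} [RCLike 𝕜]
    [NormedAddCommGroup H] [NormedSpace 𝕜 H] [NormedAddCommGroup F] [InnerProductSpace 𝕜 F]
    [NormedAddCommGroup U] [NormedSpace 𝕜 U] [NormedAddCommGroup Y] [NormedSpace 𝕜 Y]
    [NormedAddCommGroup Z] [NormedSpace 𝕜 Z]
    {A : H →ₗ.[𝕜] F} (B : U →L[𝕜] F) {C : H →L[𝕜] Y} {K : U →L[𝕜] Z} {P : H →L[𝕜] F}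
    {c : ℝ} (hc : 0 < c) (hK : ∀ u, c * ‖u‖ ≤ ‖K u‖)
    {η m : ℝ} (hη : 0 < η) (hm : 0 < m)
    (hlyap : ∀ x : A.domain, m * ‖(x : H)‖ ^ 2 ≤ ‖C x‖ ^ 2 - 2 * η * re ⟪A x, P x⟫_𝕜) :
    ∃ γ > 0, ∃ μ > 0, ∀ (x : A.domain) (u : U), μ * (‖(x : H)‖ ^ 2 + ‖u‖ ^ 2) ≤
      ‖C x‖ ^ 2 + ‖K u‖ ^ 2 - 2 * γ * re ⟪A x + B u, P x⟫_𝕜 := by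
  set β : ℝ := ‖B‖ * ‖P‖
  -- Scaling by `θ` multiplies the coercivity constant by `θ` but the square of the cross term by
  -- `θ ^ 2`, so a small `θ` lets Young's inequality absorb the cross term.
  set θ : ℝ := m * c ^ 2 / (m * c ^ 2 + (2 * (η * β)) ^ 2)
  have hθ_pos : 0 < θ := by positivity
  have hθ_le : θ ≤ 1 := div_le_one_of_le₀ (le_add_of_nonneg_right (sq_nonneg _)) (by positivity)
  have hθ_young : (2 * (θ * η * β)) ^ 2 ≤ θ * m * c ^ 2 := by
    have hθ_mul : θ * (m * c ^ 2 + (2 * (η * β)) ^ 2) = m * c ^ 2 :=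
      div_mul_cancel₀ _ (by positivity)
    have : 0 ≤ θ ^ 2 * (m * c ^ 2) := by positivity
    linear_combination θ * hθ_mul + this
  refine ⟨θ * η, mul_pos hθ_pos hη, min (θ * m / 2) (c ^ 2 / 2), by positivity, fun x u ↦ ?_⟩
  have hcross : re ⟪B u, P x⟫_𝕜 ≤ β * (‖(x : H)‖ * ‖u‖) :=
    calc re ⟪B u, P x⟫_𝕜 ≤ ‖B u‖ * ‖P x‖ := re_inner_le_norm _ _
      _ ≤ (‖B‖ * ‖u‖) * (‖P‖ * ‖(x : H)‖) := by gcongr <;> apply le_opNorm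
      _ = β * (‖(x : H)‖ * ‖u‖) := by ring
  have hKsq : c ^ 2 * ‖u‖ ^ 2 ≤ ‖K u‖ ^ 2 := by
    rw [← mul_pow]; gcongr; exact hK u
  calc min (θ * m / 2) (c ^ 2 / 2) * (‖(x : H)‖ ^ 2 + ‖u‖ ^ 2)
      ≤ θ * m / 2 * ‖(x : H)‖ ^ 2 + c ^ 2 / 2 * ‖u‖ ^ 2 := by
        rw [mul_add]; gcongr; exacts [min_le_left _ _, min_le_right _ _]
    _ ≤ θ * (m * ‖(x : H)‖ ^ 2) + c ^ 2 * ‖u‖ ^ 2 - 2 * (θ * η * β) * (‖(x : H)‖ * ‖u‖) := by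
        linear_combination two_mul_mul_le_half_add_half (by positivity) hθ_young ‖(x : H)‖ ‖u‖
    _ ≤ θ * (‖C x‖ ^ 2 - 2 * η * re ⟪A x, P x⟫_𝕜) + ‖K u‖ ^ 2
          - 2 * (θ * η) * re ⟪B u, P x⟫_𝕜 := by
        linear_combination θ * hlyap x + hKsq + 2 * (θ * η) * hcross
    _ ≤ ‖C x‖ ^ 2 + ‖K u‖ ^ 2 - 2 * (θ * η) * re ⟪A x + B u, P x⟫_𝕜 := by
        rw [inner_add_left, map_add]
        linear_combination ‖C x‖ ^ 2 * hθ_le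

section ControlSystem

variable {𝕜 H F U Y Z : Type*} [RCLike 𝕜]
  [NormedAddCommGroup H] [InnerProductSpace 𝕜 H] [NormedAddCommGroup F] [InnerProductSpace 𝕜 F]
  [NormedAddCommGroup U] [InnerProductSpace 𝕜 U] [NormedAddCommGroup Y] [InnerProductSpace 𝕜 Y]
  [NormedAddCommGroup Z] [InnerProductSpace 𝕜 Z]
  {A : H →ₗ.[𝕜] F} {B : U →L[𝕜] F} {C : H →L[𝕜] Y} {K : U →L[𝕜] Z} {z : H} {v : U} {P : H →L[𝕜] F}

theorem exists_equilibrium_and_multiplier [CompleteSpace H] [CompleteSpace F] [CompleteSpace U]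
    (hA : A.IsClosed) (hran : IsClosed {y | ∃ (x : A.domain) (u : U), A x + B u = y})
    {μ : ℝ} (hμ : 0 < μ)
    (hcoer : ∀ (x : A.domain) (u : U), A x + B u = 0 →
      μ * (‖(x : H)‖ ^ 2 + ‖u‖ ^ 2) ≤ ‖C x‖ ^ 2 + ‖K u‖ ^ 2) :
    ∃ (xe : A.domain) (ue : U) (w : F), A xe + B ue = 0 ∧ ∀ (x : A.domain) (u : U),
      ellVariation C K z v xe ue x u = ⟪w, A x + B u⟫_𝕜 := by
  let φ : StrongDual 𝕜 (H × U) := (innerSL 𝕜 z).coprod (innerSL 𝕜 v)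
  have hbound : ∀ q : (controlOperator A B).domain, controlOperator A B q = 0 →
      ‖(q : H × U)‖ ≤ (√μ)⁻¹.toNNReal * ‖outputMap C K q‖ := by
    refine forall_controlOperator_domain.2 fun x u hxu ↦ ?_
    rw [Real.coe_toNNReal _ (by positivity), le_inv_mul_iff₀ (by positivity)]
    refine le_of_sq_le_sq ?_ (norm_nonneg _)
    calc (√μ * ‖((x : H), u)‖) ^ 2 = μ * ‖((x : H), u)‖ ^ 2 := by rw [mul_pow, Real.sq_sqrt hμ.le]
      _ ≤ μ * (‖(x : H)‖ ^ 2 + ‖u‖ ^ 2) := by gcongr; exact norm_prodMk_sq_le _ _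
      _ ≤ ‖outputMap C K (x, u)‖ ^ 2 := (hcoer x u hxu).trans_eq (norm_outputMap_sq C K x u).symm
  obtain ⟨q, w, hq, hw⟩ := exists_stationary_point_and_multiplier (controlOperator A B)
    (isClosed_controlOperator hA) (by rwa [range_controlOperator]) (outputMap C K) _ hbound φ
  exact ⟨⟨q.1.1, q.2.1⟩, q.1.2, w, hq, forall_controlOperator_domain.1 hw⟩

variable (A B C K z v P) in
/-- The dissipation inequality at `(xe, ue)` for the storage function
`V(x) = γ ⟨P x, x⟩ + 2 Re ⟨w, x⟩`. The rate `ρ` sees the deviation of the control as well as that of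
the state, which covers both class-`𝒦` rates `ρ ξ υ = α ‖ξ‖` and quadratic rates in `(ξ, υ)`. -/
def DissipationInequality (γ : ℝ) (w : F) (ρ : H → U → ℝ) (xe : H) (ue : U) : Prop :=
  ∀ (x : A.domain) (u : U), 2 * re ⟪A x + B u, (γ : 𝕜) • P x + w⟫_𝕜 ≤
    ell C K z v x u - ell C K z v xe ue - ρ (x - xe) (u - ue)

namespace DissipationInequality

variable {γ μ : ℝ} {w : F} {ρ : H → U → ℝ} {xe : A.domain} {ue : U}

theorem of_multiplier (heq : A xe + B ue = 0)
    (hw : ∀ (x : A.domain) (u : U), ellVariation C K z v xe ue x u = ⟪w, A x + B u⟫_𝕜)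
    (hcoer : ∀ (x : A.domain) (u : U),
      ρ x u ≤ ‖C x‖ ^ 2 + ‖K u‖ ^ 2 - 2 * γ * re ⟪A x + B u, P x⟫_𝕜) :
    DissipationInequality A B C K z v P γ (w - (γ : 𝕜) • P xe) ρ xe ue := by
  intro x u
  have hdyn : A (x - xe) + B (u - ue) = A x + B u := by
    rw [LinearPMap.map_sub, map_sub, sub_add_sub_comm, heq, sub_zero]
  have hstorage : re ⟪A x + B u, (γ : 𝕜) • P x + (w - (γ : 𝕜) • P xe)⟫_𝕜 =
      γ * re ⟪A x + B u, P (x - xe)⟫_𝕜 + re ⟪w, A x + B u⟫_𝕜 := by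
    rw [← re_ofReal_mul, ← inner_smul_right, inner_re_symm w, ← map_add, ← inner_add_right,
      map_sub, smul_sub]
    congr 2
    abel
  have hcost := ell_add C K z v (xe : H) (x - xe) ue (u - ue)
  rw [add_sub_cancel, add_sub_cancel] at hcost
  have hw' := hw (x - xe) (u - ue)
  have hcoer' := hcoer (x - xe) (u - ue)
  rw [hdyn, AddSubgroupClass.coe_sub] at hw' hcoer'
  rw [hw'] at hcost
  linarith

theorem ell_add_rate_le (h : DissipationInequality A B C K z v P γ w ρ xe ue) {x : A.domain} {u : U}
    (hxu : A x + B u = 0) : ell C K z v xe ue + ρ (x - xe) (u - ue) ≤ ell C K z v x u := by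
  have hx := h x u
  rw [hxu, inner_zero_left, map_zero, mul_zero] at hx
  linarith

theorem rate_norm_le {α : ℝ → ℝ} (heq : A xe + B ue = 0)
    (h : DissipationInequality A B C K z v P γ w (fun ξ _ ↦ α ‖ξ‖) xe ue) (x : A.domain) :
    α ‖(x : H)‖ ≤ ‖C x‖ ^ 2 - 2 * γ * re ⟪A x, P x⟫_𝕜 := by
  have hplus := h (xe + x) ue
  have hminus := h (xe - x) ue
  have hcost := ell_add_add_ell_sub C K z v (xe : H) (x : H) ue
  rw [LinearPMap.map_add, add_right_comm, heq, zero_add] at hplus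
  rw [LinearPMap.map_sub, sub_add_eq_add_sub, heq, zero_sub] at hminus
  simp only [Submodule.coe_add, AddSubgroupClass.coe_sub, add_sub_cancel_left, sub_sub_cancel_left,
    map_add, map_sub, norm_neg, inner_neg_left, map_neg, smul_add, smul_sub, inner_add_right,
    inner_sub_right, inner_smul_right, re_ofReal_mul] at hplus hminus
  linarith

theorem rate_one_mul_norm_sq_le {α : ℝ → ℝ} (heq : A xe + B ue = 0)
    (h : DissipationInequality A B C K z v P γ w (fun ξ _ ↦ α ‖ξ‖) xe ue) (x : A.domain) :
    α 1 * ‖(x : H)‖ ^ 2 ≤ ‖C x‖ ^ 2 - 2 * γ * re ⟪A x, P x⟫_𝕜 := by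
  refine mul_norm_sq_le_of_le_on_sphere (𝕜 := 𝕜)
    (Q := fun x : A.domain ↦ ‖C x‖ ^ 2 - 2 * γ * re ⟪A x, P x⟫_𝕜) (fun t x ↦ ?_)
    (fun x hx ↦ (congrArg α hx).symm.trans_le (rate_norm_le heq h x)) x
  simp only [LinearPMap.map_smul, Submodule.coe_smul, map_smul, norm_smul, norm_ofReal, mul_pow,
    sq_abs, inner_smul_left, inner_smul_right, conj_ofReal, re_ofReal_mul]
  ring

theorem ell_le (hμ : 0 ≤ μ)
    (h : DissipationInequality A B C K z v P γ w (fun ξ υ ↦ μ * (‖ξ‖ ^ 2 + ‖υ‖ ^ 2)) xe ue)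
    {x : A.domain} {u : U} (hxu : A x + B u = 0) : ell C K z v xe ue ≤ ell C K z v x u :=
  (le_add_of_nonneg_right (by positivity)).trans (h.ell_add_rate_le hxu)

theorem eq_of_ell_le (hμ : 0 < μ)
    (h : DissipationInequality A B C K z v P γ w (fun ξ υ ↦ μ * (‖ξ‖ ^ 2 + ‖υ‖ ^ 2)) xe ue)
    {x : A.domain} {u : U} (hxu : A x + B u = 0) (hle : ell C K z v x u ≤ ell C K z v xe ue) :
    (x : H) = xe ∧ u = ue := by
  have hrate : μ * (‖(x : H) - xe‖ ^ 2 + ‖u - ue‖ ^ 2) ≤ 0 := by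
    linarith [h.ell_add_rate_le hxu]
  have hsum := nonpos_of_mul_nonpos_right hrate hμ
  rw [← sub_eq_zero, ← sub_eq_zero (a := u), ← norm_eq_zero, ← norm_eq_zero (a := u - ue)]
  constructor <;> nlinarith

theorem norm_sq_rate (hμ : 0 ≤ μ)
    (h : DissipationInequality A B C K z v P γ w (fun ξ υ ↦ μ * (‖ξ‖ ^ 2 + ‖υ‖ ^ 2)) xe ue) :
    DissipationInequality A B C K z v P γ w (fun ξ _ ↦ μ * ‖ξ‖ ^ 2) xe ue := by
  intro x u
  refine (h x u).trans (sub_le_sub_left ?_ _)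
  exact mul_le_mul_of_nonneg_left (le_add_of_nonneg_right (sq_nonneg _)) hμ

end DissipationInequality

theorem exists_dissipationInequality_of_lyapunov [CompleteSpace H] [CompleteSpace F]
    [CompleteSpace U] (hA : A.IsClosed)
    (hran : IsClosed {y | ∃ (x : A.domain) (u : U), A x + B u = y})
    {c : ℝ} (hc : 0 < c) (hK : ∀ u, c * ‖u‖ ≤ ‖K u‖) {η m : ℝ} (hη : 0 < η) (hm : 0 < m)
    (hlyap : ∀ x : A.domain, m * ‖(x : H)‖ ^ 2 ≤ ‖C x‖ ^ 2 - 2 * η * re ⟪A x, P x⟫_𝕜) :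
    ∃ γ > 0, ∃ μ > 0, ∃ (w : F) (xe : A.domain) (ue : U), A xe + B ue = 0 ∧
      DissipationInequality A B C K z v P γ w (fun ξ υ ↦ μ * (‖ξ‖ ^ 2 + ‖υ‖ ^ 2)) xe ue := by
  obtain ⟨γ, hγ, μ, hμ, hcoer⟩ := exists_coercive_of_lyapunov B hc hK hη hm hlyap
  obtain ⟨xe, ue, w, heq, hw⟩ := exists_equilibrium_and_multiplier (z := z) (v := v) hA hran hμ
    fun x u hxu ↦ by simpa [hxu] using hcoer x u
  exact ⟨γ, hγ, μ, hμ, _, xe, ue, heq, .of_multiplier heq hw hcoer⟩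

end ControlSystem

theorem strict_predissipativity_at_some_steady_state_iff_general
    {𝕜 H F U Y Z : Type*} [RCLike 𝕜]
    [NormedAddCommGroup H] [InnerProductSpace 𝕜 H] [CompleteSpace H]
    [NormedAddCommGroup F] [InnerProductSpace 𝕜 F] [CompleteSpace F]
    [NormedAddCommGroup U] [InnerProductSpace 𝕜 U] [CompleteSpace U]
    [NormedAddCommGroup Y] [InnerProductSpace 𝕜 Y]
    [NormedAddCommGroup Z] [InnerProductSpace 𝕜 Z]
    (A : H →ₗ.[𝕜] F) (hAclosed : A.IsClosed)
    (B : U →L[𝕜] F) (C : H →L[𝕜] Y) (K : U →L[𝕜] Z) (z : H) (v : U)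
    (c : ℝ) (hc : 0 < c) (hK : ∀ u : U, c * ‖u‖ ≤ ‖K u‖)
    (hran : IsClosed {y : F | ∃ (x : A.domain) (u : U), A x + B u = y})
    (P : H →L[𝕜] F) :
    ((∃ γ : ℝ, 0 < γ ∧ ∃ w : F, ∃ xe : H, ∃ ue : U, ∃ hxe : xe ∈ A.domain,
        A ⟨xe, hxe⟩ + B ue = 0 ∧ ∃ α : ℝ → ℝ, IsClassK α ∧
        ∀ (x : A.domain) (u : U),
          2 * re ⟪A x + B u, (γ : 𝕜) • P (x : H) + w⟫_𝕜 ≤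
            ell C K z v (x : H) u - ell C K z v xe ue - α ‖(x : H) - xe‖)
      ↔
      (∃ η : ℝ, 0 < η ∧ ∃ m : ℝ, 0 < m ∧
        ∀ x : A.domain,
          m * ‖(x : H)‖ ^ 2 ≤ ‖C (x : H)‖ ^ 2 - 2 * η * re ⟪A x, P (x : H)⟫_𝕜))
    ∧
    ((∃ η : ℝ, 0 < η ∧ ∃ m : ℝ, 0 < m ∧
        ∀ x : A.domain,
          m * ‖(x : H)‖ ^ 2 ≤ ‖C (x : H)‖ ^ 2 - 2 * η * re ⟪A x, P (x : H)⟫_𝕜) →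
      ∃ (xe : H) (ue : U) (hxe : xe ∈ A.domain),
        A ⟨xe, hxe⟩ + B ue = 0 ∧
        (∀ (x : A.domain) (u : U), A x + B u = 0 →
          ell C K z v xe ue ≤ ell C K z v (x : H) u) ∧
        (∀ (x : A.domain) (u : U), A x + B u = 0 →
          (∀ (x' : A.domain) (u' : U), A x' + B u' = 0 →
            ell C K z v (x : H) u ≤ ell C K z v (x' : H) u') →
          (x : H) = xe ∧ u = ue) ∧
        ∃ γ : ℝ, 0 < γ ∧ ∃ w : F, ∃ α : ℝ → ℝ, IsClassK α ∧
          ∀ (x : A.domain) (u : U),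
            2 * re ⟪A x + B u, (γ : 𝕜) • P (x : H) + w⟫_𝕜 ≤
              ell C K z v (x : H) u - ell C K z v xe ue - α ‖(x : H) - xe‖) := by
  refine ⟨⟨?dissipative_imp_lyapunov, ?lyapunov_imp_dissipative⟩, ?lyapunov_imp_optimal⟩
  case dissipative_imp_lyapunov =>
    rintro ⟨γ, hγ, w, xe, ue, hxe, heq, α, hα, h⟩
    exact ⟨γ, hγ, α 1, hα.pos one_pos,
      DissipationInequality.rate_one_mul_norm_sq_le (xe := ⟨xe, hxe⟩) heq h⟩
  case lyapunov_imp_dissipative =>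
    rintro ⟨η, hη, m, hm, hlyap⟩
    obtain ⟨γ, hγ, μ, hμ, w, xe, ue, heq, h⟩ :=
      exists_dissipationInequality_of_lyapunov hAclosed hran hc hK hη hm hlyap
    exact ⟨γ, hγ, w, xe, ue, xe.2, heq, _, isClassK_const_mul_sq hμ, h.norm_sq_rate hμ.le⟩
  case lyapunov_imp_optimal =>
    rintro ⟨η, hη, m, hm, hlyap⟩
    obtain ⟨γ, hγ, μ, hμ, w, xe, ue, heq, h⟩ :=
      exists_dissipationInequality_of_lyapunov hAclosed hran hc hK hη hm hlyap
    exact ⟨xe, ue, xe.2, heq, fun x u hxu ↦ h.ell_le hμ.le hxu,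
      fun x u hxu hmin ↦ h.eq_of_ell_le hμ hxu (hmin xe ue heq),
      γ, hγ, w, _, isClassK_const_mul_sq hμ, h.norm_sq_rate hμ.le⟩

/-- **Theorem 4.7**: strict pre-dissipativity at *some* controlled equilibrium with
storage function `V_{γP,w}` is equivalent to the Lyapunov-like form inequality;
moreover, the equilibrium can be chosen as the unique minimizer of the optimal
steady-state problem. -/
theorem strict_predissipativity_at_some_steady_state_iff
    {𝕜 H U Y Z : Type*} [RCLike 𝕜]
    [NormedAddCommGroup H] [InnerProductSpace 𝕜 H] [CompleteSpace H]
    [NormedAddCommGroup U] [InnerProductSpace 𝕜 U] [CompleteSpace U]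
    [NormedAddCommGroup Y] [InnerProductSpace 𝕜 Y] [CompleteSpace Y]
    [NormedAddCommGroup Z] [InnerProductSpace 𝕜 Z] [CompleteSpace Z]
    (A : H →ₗ.[𝕜] H) (hA : Dense (A.domain : Set H)) (hAclosed : A.IsClosed)
    (B : U →L[𝕜] H) (C : H →L[𝕜] Y) (K : U →L[𝕜] Z) (z : H) (v : U)
    (c : ℝ) (hc : 0 < c) (hK : ∀ u : U, c * ‖u‖ ≤ ‖K u‖)
    (hran : IsClosed {y : H | ∃ (x : A.domain) (u : U), A x + B u = y})
    (P : H →L[𝕜] H) (hP : IsSelfAdjoint P) :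
    ((∃ γ : ℝ, 0 < γ ∧ ∃ w : H, ∃ xe : H, ∃ ue : U, ∃ hxe : xe ∈ A.domain,
        A ⟨xe, hxe⟩ + B ue = 0 ∧ ∃ α : ℝ → ℝ, IsClassK α ∧
        ∀ (x : A.domain) (u : U),
          2 * re ⟪A x + B u, (γ : 𝕜) • P (x : H) + w⟫_𝕜 ≤
            ell C K z v (x : H) u - ell C K z v xe ue - α ‖(x : H) - xe‖)
      ↔
      (∃ η : ℝ, 0 < η ∧ ∃ m : ℝ, 0 < m ∧
        ∀ x : A.domain,
          m * ‖(x : H)‖ ^ 2 ≤ ‖C (x : H)‖ ^ 2 - 2 * η * re ⟪A x, P (x : H)⟫_𝕜))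
    ∧
    ((∃ η : ℝ, 0 < η ∧ ∃ m : ℝ, 0 < m ∧
        ∀ x : A.domain,
          m * ‖(x : H)‖ ^ 2 ≤ ‖C (x : H)‖ ^ 2 - 2 * η * re ⟪A x, P (x : H)⟫_𝕜) →
      ∃ (xe : H) (ue : U) (hxe : xe ∈ A.domain),
        A ⟨xe, hxe⟩ + B ue = 0 ∧
        -- (xe, ue) is a minimizer of ℓ over the steady states
        (∀ (x : A.domain) (u : U), A x + B u = 0 →
          ell C K z v xe ue ≤ ell C K z v (x : H) u) ∧
        -- and it is the unique such minimizer
        (∀ (x : A.domain) (u : U), A x + B u = 0 →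
          (∀ (x' : A.domain) (u' : U), A x' + B u' = 0 →
            ell C K z v (x : H) u ≤ ell C K z v (x' : H) u') →
          (x : H) = xe ∧ u = ue) ∧
        -- strict pre-dissipativity holds at (xe, ue)
        ∃ γ : ℝ, 0 < γ ∧ ∃ w : H, ∃ α : ℝ → ℝ, IsClassK α ∧
          ∀ (x : A.domain) (u : U),
            2 * re ⟪A x + B u, (γ : 𝕜) • P (x : H) + w⟫_𝕜 ≤
              ell C K z v (x : H) u - ell C K z v xe ue - α ‖(x : H) - xe‖) :=
  strict_predissipativity_at_some_steady_state_iff_general A hAclosed B C K z v c hc hK hran P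
end

section
/- Characterization of strict pre-dissipativity with a fixed quadratic storage function (Proposition 4.4): Let P be a bounded self-adjoint operator on H, w ∈ H, α of class 𝒦, and let (x_e,u_e) be a controlled equilibrium. Then the following are equivalent: (i) 2Re⟨Ax + Bu, Px + w⟩ ≤ ℓ(x,u) − ℓ(x_e,u_e) − α(‖x − x_e‖) for all x ∈ dom A and u ∈ U; (ii) w + P x_e ∈ dom A*, A*(w + P x_e) = z + C*C x_e, B*(w + P x_e) = v + K*K u_e, and 2Re⟨Ax + Bu, Px⟩ ≤ ‖Cx‖² + ‖Ku‖² − α(‖x‖) for all x ∈ dom A and u ∈ U. -/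
open scoped InnerProductSpace
open RCLike ContinuousLinearMap

/-!
Expanding the stage cost and the storage derivative around the controlled equilibrium turns (i) into
`ρ x ≤ q (x, u) + 2 Re f (x, u)` on `dom A × U`, where `q` is homogeneous of degree two, `f` is a
linear functional and `ρ = α ∘ ‖·‖ ≥ 0`. Near the origin the linear term dominates the quadratic
one, so nonnegativity of the right-hand side forces `f = 0`, and the vanishing of `f` is exactly the
pair of adjoint equations in (ii).
-/

section Homogeneous

variable {𝕜 V : Type*} [RCLike 𝕜] [AddCommGroup V] [Module 𝕜 V]

theorem linearMap_eq_zero_of_forall_re_eq_zero (f : V →ₗ[𝕜] 𝕜) (hf : ∀ x, re (f x) = 0) :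
    f = 0 := by
  ext x
  have re_map_conj_smul : re (f (starRingEnd 𝕜 (f x) • x)) = ‖f x‖ ^ 2 := by
    rw [map_smul, smul_eq_mul, RCLike.conj_mul, ← RCLike.ofReal_pow, RCLike.ofReal_re]
  simpa using re_map_conj_smul.symm.trans (hf _)

theorem linearMap_eq_zero_of_forall_nonneg_add_re (f : V →ₗ[𝕜] 𝕜) (q : V → ℝ)
    (hq : ∀ (t : ℝ) (x : V), q ((t : 𝕜) • x) = t ^ 2 * q x)
    (h : ∀ x, 0 ≤ q x + 2 * re (f x)) : f = 0 := by
  refine linearMap_eq_zero_of_forall_re_eq_zero f fun x ↦ ?_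
  have nonneg_on_line (t : ℝ) : 0 ≤ q x * (t * t) + 2 * re (f x) * t + 0 := by
    have h_smul := h ((t : 𝕜) • x)
    rw [hq, map_smul, smul_eq_mul, RCLike.re_ofReal_mul] at h_smul
    linarith
  have discrim_nonpos := discrim_le_zero nonneg_on_line
  rw [discrim] at discrim_nonpos
  nlinarith

theorem forall_le_add_re_iff (f : V →ₗ[𝕜] 𝕜) (q : V → ℝ)
    (hq : ∀ (t : ℝ) (x : V), q ((t : 𝕜) • x) = t ^ 2 * q x)
    (ρ : V → ℝ) (hρ : ∀ x, 0 ≤ ρ x) :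
    (∀ x, ρ x ≤ q x + 2 * re (f x)) ↔ f = 0 ∧ ∀ x, ρ x ≤ q x := by
  constructor
  · intro h
    have f_eq_zero : f = 0 :=
      linearMap_eq_zero_of_forall_nonneg_add_re f q hq fun x ↦ (hρ x).trans (h x)
    exact ⟨f_eq_zero, by simpa [f_eq_zero] using h⟩
  · rintro ⟨rfl, h⟩
    simpa using h

end Homogeneous

theorem IsClassK.nonneg {α : ℝ → ℝ} (hα : IsClassK α) {r : ℝ} (hr : 0 ≤ r) : 0 ≤ α r := by
  obtain ⟨-, strictMono, map_zero⟩ := hα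
  simpa [map_zero] using strictMono.monotoneOn Set.self_mem_Ici hr hr

section System

variable {𝕜 H F U Y Z : Type*} [RCLike 𝕜]
  [NormedAddCommGroup H] [InnerProductSpace 𝕜 H]
  [NormedAddCommGroup F] [InnerProductSpace 𝕜 F]
  [NormedAddCommGroup U] [InnerProductSpace 𝕜 U]
  [NormedAddCommGroup Y] [InnerProductSpace 𝕜 Y]
  [NormedAddCommGroup Z] [InnerProductSpace 𝕜 Z]

theorem exists_linearPMap_adjoint_apply_eq_iff [CompleteSpace H] {A : H →ₗ.[𝕜] F}
    (hA : Dense (A.domain : Set H)) (y : F) (z : H) :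
    (∃ hy : y ∈ A.adjoint.domain, A.adjoint ⟨y, hy⟩ = z) ↔
      ∀ x : A.domain, ⟪z, (x : H)⟫_𝕜 = ⟪y, A x⟫_𝕜 := by
  constructor
  · rintro ⟨hy, rfl⟩ x
    exact LinearPMap.adjoint_isFormalAdjoint hA ⟨y, hy⟩ x
  · intro h
    exact ⟨LinearPMap.mem_adjoint_domain_of_exists y ⟨z, h⟩, LinearPMap.adjoint_apply_eq hA _ h⟩

theorem clm_adjoint_apply_eq_iff [CompleteSpace U] [CompleteSpace F] (B : U →L[𝕜] F)
    (y : F) (v : U) : adjoint B y = v ↔ ∀ u, ⟪v, u⟫_𝕜 = ⟪y, B u⟫_𝕜 := by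
  simp only [← adjoint_inner_left, ← ext_iff_inner_right 𝕜, eq_comm]

/-- The linear functional `(x, u) ↦ ⟨z, x⟩ + ⟨v, u⟩ - ⟨y, A x + B u⟩` on `dom A × U`. It measures
the failure of `A* y = z` and `B* y = v` without presupposing `y ∈ dom A*`. -/
noncomputable def adjointResidual (A : H →ₗ.[𝕜] F) (B : U →L[𝕜] F) (y : F) (z : H) (v : U) :
    A.domain × U →ₗ[𝕜] 𝕜 :=
  (innerₛₗ 𝕜 z ∘ₗ A.domain.subtype - innerₛₗ 𝕜 y ∘ₗ A.toFun).coprod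
    (innerₛₗ 𝕜 v - innerₛₗ 𝕜 y ∘ₗ B.toLinearMap)

theorem adjointResidual_apply (A : H →ₗ.[𝕜] F) (B : U →L[𝕜] F) (y : F) (z : H) (v : U)
    (x : A.domain) (u : U) :
    adjointResidual A B y z v (x, u) =
      (⟪z, (x : H)⟫_𝕜 - ⟪y, A x⟫_𝕜) + (⟪v, u⟫_𝕜 - ⟪y, B u⟫_𝕜) :=
  rfl

theorem adjointResidual_eq_zero_iff [CompleteSpace H] [CompleteSpace F] [CompleteSpace U]
    {A : H →ₗ.[𝕜] F} (hA : Dense (A.domain : Set H)) (B : U →L[𝕜] F) (y : F) (z : H) (v : U) :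
    adjointResidual A B y z v = 0 ↔
      (∃ hy : y ∈ A.adjoint.domain, A.adjoint ⟨y, hy⟩ = z) ∧ adjoint B y = v := by
  rw [exists_linearPMap_adjoint_apply_eq_iff hA, clm_adjoint_apply_eq_iff]
  constructor
  · intro h
    have apply_eq_zero (x : A.domain) (u : U) := LinearMap.congr_fun h (x, u)
    simp only [adjointResidual_apply, LinearMap.zero_apply] at apply_eq_zero
    exact ⟨fun x ↦ by simpa [sub_eq_zero] using apply_eq_zero x 0,
      fun u ↦ by simpa [sub_eq_zero] using apply_eq_zero 0 u⟩
  · rintro ⟨hz, hv⟩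
    refine LinearMap.ext fun ⟨x, u⟩ ↦ ?_
    simp [adjointResidual_apply, hz, hv]

/-- The purely quadratic part `(x, u) ↦ ‖C x‖² + ‖K u‖² - 2 Re ⟨A x + B u, P x⟩` on `dom A × U` of
the stage cost minus the storage derivative. -/
noncomputable def dissipationForm (A : H →ₗ.[𝕜] F) (B : U →L[𝕜] F) (C : H →L[𝕜] Y)
    (K : U →L[𝕜] Z) (P : H →ₗ[𝕜] F) (p : A.domain × U) : ℝ :=
  ‖C (p.1 : H)‖ ^ 2 + ‖K p.2‖ ^ 2 - 2 * re ⟪A p.1 + B p.2, P (p.1 : H)⟫_𝕜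

theorem dissipationForm_ofReal_smul (A : H →ₗ.[𝕜] F) (B : U →L[𝕜] F) (C : H →L[𝕜] Y)
    (K : U →L[𝕜] Z) (P : H →ₗ[𝕜] F) (t : ℝ) (p : A.domain × U) :
    dissipationForm A B C K P ((t : 𝕜) • p) = t ^ 2 * dissipationForm A B C K P p := by
  simp only [dissipationForm, Prod.smul_fst, Prod.smul_snd, A.map_smul, Submodule.coe_smul,
    map_smul, ← smul_add, inner_smul_left, inner_smul_right, norm_smul, RCLike.conj_ofReal,
    RCLike.re_ofReal_mul, RCLike.norm_ofReal, mul_pow, sq_abs]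
  ring

theorem norm_map_add_sq [CompleteSpace H] [CompleteSpace Y] (C : H →L[𝕜] Y) (x xe : H) :
    ‖C (x + xe)‖ ^ 2 = ‖C x‖ ^ 2 + 2 * re ⟪adjoint C (C xe), x⟫_𝕜 + ‖C xe‖ ^ 2 := by
  rw [map_add, norm_add_sq (𝕜 := 𝕜), adjoint_inner_left, inner_re_symm]

theorem ell_add_sub_ell [CompleteSpace H] [CompleteSpace U] [CompleteSpace Y] [CompleteSpace Z]
    (C : H →L[𝕜] Y) (K : U →L[𝕜] Z) (z : H) (v : U) (x xe : H) (u ue : U) :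
    ell C K z v (x + xe) (u + ue) - ell C K z v xe ue =
      ell C K (z + adjoint C (C xe)) (v + adjoint K (K ue)) x u := by
  rw [ell, norm_map_add_sq, norm_map_add_sq]
  simp only [ell, inner_add_left, inner_add_right, map_add]
  ring

theorem re_inner_map_add_equilibrium (A : H →ₗ.[𝕜] F) (B : U →L[𝕜] F) (P : H →ₗ[𝕜] F) (w : F)
    {xe : A.domain} {ue : U} (heq : A xe + B ue = 0) (x : A.domain) (u : U) :
    re ⟪A (x + xe) + B (u + ue), P (x + xe : H) + w⟫_𝕜 =
      re ⟪A x + B u, P (x : H)⟫_𝕜 + re ⟪w + P xe, A x + B u⟫_𝕜 := by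
  have dynamics_eq : A (x + xe) + B (u + ue) = A x + B u := by
    rw [A.map_add, map_add, add_add_add_comm, heq, add_zero]
  have costate_eq : P (x + xe : H) + w = P (x : H) + (w + P xe) := by
    rw [map_add, add_assoc, add_comm w]
  rw [dynamics_eq, costate_eq, inner_add_right, map_add, inner_re_symm (w + P xe)]

theorem ell_sub_storage_deriv_add_equilibrium
    [CompleteSpace H] [CompleteSpace U] [CompleteSpace Y] [CompleteSpace Z]
    (A : H →ₗ.[𝕜] F) (B : U →L[𝕜] F) (C : H →L[𝕜] Y) (K : U →L[𝕜] Z) (z : H) (v : U)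
    (P : H →ₗ[𝕜] F) (w : F) {xe : A.domain} {ue : U} (heq : A xe + B ue = 0)
    (x : A.domain) (u : U) :
    ell C K z v (x + xe : H) (u + ue) - ell C K z v xe ue
        - 2 * re ⟪A (x + xe) + B (u + ue), P (x + xe : H) + w⟫_𝕜 =
      dissipationForm A B C K P (x, u) + 2 * re (adjointResidual A B (w + P xe)
        (z + adjoint C (C xe)) (v + adjoint K (K ue)) (x, u)) := by
  rw [ell_add_sub_ell, re_inner_map_add_equilibrium A B P w heq, adjointResidual_apply,
    inner_add_right (w + P xe)]
  simp only [ell, dissipationForm, map_add, map_sub]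
  ring

theorem forall_storage_deriv_le_iff_forall_le_add_re
    [CompleteSpace H] [CompleteSpace U] [CompleteSpace Y] [CompleteSpace Z]
    (A : H →ₗ.[𝕜] F) (B : U →L[𝕜] F) (C : H →L[𝕜] Y) (K : U →L[𝕜] Z) (z : H) (v : U)
    (P : H →ₗ[𝕜] F) (w : F) (ρ : H → ℝ) {xe : A.domain} {ue : U} (heq : A xe + B ue = 0) :
    (∀ (x : A.domain) (u : U),
      2 * re ⟪A x + B u, P (x : H) + w⟫_𝕜 ≤
        ell C K z v (x : H) u - ell C K z v xe ue - ρ ((x : H) - xe)) ↔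
      ∀ p : A.domain × U,
        ρ p.1 ≤ dissipationForm A B C K P p + 2 * re (adjointResidual A B (w + P xe)
          (z + adjoint C (C xe)) (v + adjoint K (K ue)) p) := by
  rw [Prod.forall, ← (Equiv.addRight xe).forall_congr_right]
  refine forall_congr' fun x ↦ ?_
  rw [← (Equiv.addRight ue).forall_congr_right]
  refine forall_congr' fun u ↦ ?_
  rw [← ell_sub_storage_deriv_add_equilibrium A B C K z v P w heq]
  simp only [Equiv.coe_addRight, Submodule.coe_add, add_sub_cancel_right]
  exact le_sub_comm

theorem strict_predissipativity_quadratic_storage_iff_general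
    [CompleteSpace H] [CompleteSpace F] [CompleteSpace U] [CompleteSpace Y] [CompleteSpace Z]
    (A : H →ₗ.[𝕜] F) (hA : Dense (A.domain : Set H))
    (B : U →L[𝕜] F) (C : H →L[𝕜] Y) (K : U →L[𝕜] Z) (z : H) (v : U)
    (P : H →ₗ[𝕜] F) (w : F) (ρ : H → ℝ) (hρ : ∀ x, 0 ≤ ρ x)
    (xe : A.domain) (ue : U) (heq : A xe + B ue = 0) :
    (∀ (x : A.domain) (u : U),
      2 * re ⟪A x + B u, P (x : H) + w⟫_𝕜 ≤
        ell C K z v (x : H) u - ell C K z v xe ue - ρ ((x : H) - xe))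
    ↔
    (∃ hw : w + P xe ∈ A.adjoint.domain,
      A.adjoint ⟨w + P xe, hw⟩ = z + adjoint C (C xe) ∧
      adjoint B (w + P xe) = v + adjoint K (K ue) ∧
      ∀ (x : A.domain) (u : U),
        2 * re ⟪A x + B u, P (x : H)⟫_𝕜 ≤
          ‖C (x : H)‖ ^ 2 + ‖K u‖ ^ 2 - ρ x) := by
  rw [forall_storage_deriv_le_iff_forall_le_add_re A B C K z v P w ρ heq,
    forall_le_add_re_iff _ _ (dissipationForm_ofReal_smul A B C K P) _ fun p ↦ hρ p.1,
    adjointResidual_eq_zero_iff hA, Prod.forall]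
  simp only [dissipationForm, le_sub_comm, exists_and_right, and_assoc]

end System

/-- **Proposition 4.4**: characterization of strict pre-dissipativity at a controlled
equilibrium `(x_e, u_e)` with a fixed quadratic storage function `V_{P,w}` and
dissipation rate `α`. -/
theorem strict_predissipativity_quadratic_storage_iff
    {𝕜 H U Y Z : Type*} [RCLike 𝕜]
    [NormedAddCommGroup H] [InnerProductSpace 𝕜 H] [CompleteSpace H]
    [NormedAddCommGroup U] [InnerProductSpace 𝕜 U] [CompleteSpace U]
    [NormedAddCommGroup Y] [InnerProductSpace 𝕜 Y] [CompleteSpace Y]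
    [NormedAddCommGroup Z] [InnerProductSpace 𝕜 Z] [CompleteSpace Z]
    (A : H →ₗ.[𝕜] H) (hA : Dense (A.domain : Set H))
    (B : U →L[𝕜] H) (C : H →L[𝕜] Y) (K : U →L[𝕜] Z) (z : H) (v : U)
    (P : H →L[𝕜] H) (hP : IsSelfAdjoint P) (w : H)
    (α : ℝ → ℝ) (hα : IsClassK α)
    (xe : H) (ue : U) (hxe : xe ∈ A.domain) (heq : A ⟨xe, hxe⟩ + B ue = 0) :
    (∀ (x : A.domain) (u : U),
      2 * re ⟪A x + B u, P (x : H) + w⟫_𝕜 ≤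
        ell C K z v (x : H) u - ell C K z v xe ue - α ‖(x : H) - xe‖)
    ↔
    (∃ hw : w + P xe ∈ A.adjoint.domain,
      A.adjoint ⟨w + P xe, hw⟩ = z + adjoint C (C xe) ∧
      adjoint B (w + P xe) = v + adjoint K (K ue) ∧
      ∀ (x : A.domain) (u : U),
        2 * re ⟪A x + B u, P (x : H)⟫_𝕜 ≤
          ‖C (x : H)‖ ^ 2 + ‖K u‖ ^ 2 - α ‖(x : H)‖) :=
  strict_predissipativity_quadratic_storage_iff_general A hA B C K z v P.toLinearMap w
    (fun x ↦ α ‖x‖) (fun x ↦ hα.nonneg (norm_nonneg x)) ⟨xe, hxe⟩ ue heq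
end
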